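/- Let k ≥ 3 and n ≥ k. Assume (inductive hypothesis) that every finite system of forces on (k−2)-simplices in ℝ^n that is in equilibrium can be written as a finite sum of (k−1)-beams with symmetric coefficient matrices that are structural for their simplices. Let O denote the origin, let [O, a_0^i, …, a_{k−2}^i], i = 1, …, l, be (k−1)-simplices each having the origin as a vertex, and let F_1, …, F_l ∈ ℝ^n. If the finite system of forces F = Σ_{i=1}^{l} F_i μ_{[O, a_0^i, …, a_{k−2}^i]} is in equilibrium, then there exist finitely many k-simplices τ_1, …, τ_m in ℝ^n and symmetric real n×n matrices A_1, …, A_m, with each A_j structural for τ_j, such that F = Σ_{j=1}^{m} A_j ⊗ Beam(τ_j) as ℝ^n-valued vector measures. -/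

import Mathlib

open MeasureTheory Matrix
open scoped RealInnerProductSpace

noncomputable section

abbrev Euc (n : ℕ) : Type := EuclideanSpace ℝ (Fin n)

/-- The action of an `n × n` real matrix on a vector of `ℝⁿ`. -/
def matVec {n : ℕ} (A : Matrix (Fin n) (Fin n) ℝ) (v : Euc n) : Euc n :=
  Matrix.toEuclideanLin A v

/-- `wedge v w = v wᵀ − w vᵀ`. -/
def wedge {n : ℕ} (v w : Euc n) : Matrix (Fin n) (Fin n) ℝ :=
  Matrix.of fun p q => v p * w q - w p * v q

/-- `rankOne v = v vᵀ`. -/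
def rankOne {n : ℕ} (v : Euc n) : Matrix (Fin n) (Fin n) ℝ :=
  Matrix.of fun p q => v p * v q

/-- The (closed) simplex spanned by a family of points: the convex hull of its range. -/
def simplexSet {n : ℕ} {ι : Type*} (b : ι → Euc n) : Set (Euc n) :=
  convexHull ℝ (Set.range b)

/-- The barycenter of a finite family of points. -/
def bary {n : ℕ} {ι : Type*} [Fintype ι] (b : ι → Euc n) : Euc n :=
  (Fintype.card ι : ℝ)⁻¹ • ∑ i, b i

/-- The vertices of the face of the simplex `b` opposite to the vertex `i`. -/
def face {n K : ℕ} (b : Fin K → Euc n) (i : Fin K) : {j : Fin K // j ≠ i} → Euc n :=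
  fun j => b j.1

/-- The vector measure `Σᵢ Fᵢ μ_{sᵢ}` of a finite system of forces, as an
`ℝⁿ`-valued set function; here `d` is the Hausdorff dimension of the simplices. -/
def sys {n l : ℕ} {ι : Type*} (d : ℝ) (s : Fin l → ι → Euc n) (F : Fin l → Euc n) :
    Set (Euc n) → Euc n :=
  fun S => ∑ i, (μH[d] (S ∩ simplexSet (s i))).toReal • F i

/-- A finite system of forces is in equilibrium: zero net force and zero net torque. -/
def equil {n l : ℕ} {ι : Type*} [Fintype ι] (d : ℝ) (s : Fin l → ι → Euc n)
    (F : Fin l → Euc n) : Prop :=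
  (∑ i, (μH[d] (simplexSet (s i))).toReal • F i = 0) ∧
  (∑ i, (μH[d] (simplexSet (s i))).toReal • wedge (bary (s i)) (F i) = 0)

/-- `v` is the outward unit conormal of the face of `b` opposite vertex `i`. -/
def IsConormal {n K : ℕ} (b : Fin K → Euc n) (i : Fin K) (v : Euc n) : Prop :=
  v ∈ vectorSpan ℝ (Set.range b) ∧ ‖v‖ = 1 ∧
    (∀ w ∈ vectorSpan ℝ (Set.range (face b i)), ⟪v, w⟫ = 0) ∧
    ⟪v, b i - bary (face b i)⟫ < 0

open scoped Classical in
/-- The outward unit conormal of the face of `b` opposite vertex `i`. -/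
def conormal {n K : ℕ} (b : Fin K → Euc n) (i : Fin K) : Euc n :=
  if h : ∃ v, IsConormal b i v then h.choose else 0

/-- A matrix is structural for a simplex if its range is contained in the
direction space of the simplex. -/
def Structural {n : ℕ} {ι : Type*} (A : Matrix (Fin n) (Fin n) ℝ) (b : ι → Euc n) : Prop :=
  ∀ v, matVec A v ∈ vectorSpan ℝ (Set.range b)

/-- The beam `A ⊗ Beam(τ)` of a simplex `τ` with `K` vertices (so of dimension `K − 1`,
with faces of dimension `K − 2`), as an `ℝⁿ`-valued set function. -/
def beam {n K : ℕ} (A : Matrix (Fin n) (Fin n) ℝ) (b : Fin K → Euc n) :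
    Set (Euc n) → Euc n :=
  fun S => ∑ i, (μH[(K : ℝ) - 2] (S ∩ simplexSet (face b i))).toReal • matVec A (conormal b i)

/-- `G` is a finite sum of beams over simplices with `K` vertices, with symmetric
coefficient matrices that are structural for their simplices. -/
def IsBeamSum {n : ℕ} (K : ℕ) (G : Set (Euc n) → Euc n) : Prop :=
  ∃ (m : ℕ) (τ : Fin m → Fin K → Euc n) (A : Fin m → Matrix (Fin n) (Fin n) ℝ),
    (∀ j, AffineIndependent ℝ (τ j)) ∧ (∀ j, (A j).IsSymm) ∧
    (∀ j, Structural (A j) (τ j)) ∧ (G = fun S => ∑ j, beam (A j) (τ j) S)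

section Alg
open Function
set_option linter.unusedSectionVars false
variable {V W Q : Type*} [AddCommGroup V] [Module ℝ V] [AddCommGroup W] [Module ℝ W]
  [AddCommGroup Q] [Module ℝ Q]

theorem ext_lemma (P : Set V) (o : V) (ho : o ∈ P)
    (hspan : Submodule.span ℝ ((fun y => y - o) '' P) = ⊤) (φ : V → V →ₗ[ℝ] W)
    (hS : ∀ y ∈ P, ∀ z ∈ P, φ y (z - y) = φ z (z - y)) :
    ∃ θ : V →ₗ[ℝ] V →ₗ[ℝ] W, (∀ v w, θ v w = - θ w v) ∧
      ∀ y ∈ P, ∀ z ∈ P, φ y - φ z = θ (y - z) := by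
  classical
  have key : ∀ y ∈ P, ∀ z ∈ P, (φ y - φ o) (z - o) = - (φ z - φ o) (y - o) := by
    intro y hy z hz
    have h1 := hS y hy z hz
    have h2 := hS o ho y hy
    have h3 := hS o ho z hz
    have e : z - y = (z - o) - (y - o) := by abel
    rw [e, map_sub (φ y) (z - o), map_sub (φ z) (z - o)] at h1
    simp only [LinearMap.sub_apply]
    have h4 : (φ y) (z - o) = (φ z) (z - o) - (φ z) (y - o) + φ y (y - o) := by
      rw [← h1]; abel
    rw [h4, h2, h3]; abel
  have hsp : (⊤ : Submodule ℝ V) ≤ Submodule.span ℝ ((fun y => y - o) '' P) := hspan.ge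
  let B := Module.Basis.ofSpan hsp
  have hB : ∀ i, B i ∈ (fun y => y - o) '' P := fun i =>
    Module.Basis.ofSpan_subset hsp ⟨i, rfl⟩
  let θ : V →ₗ[ℝ] V →ₗ[ℝ] W := B.constr ℝ (fun i => φ (o + B i) - φ o)
  have h1 : ∀ z ∈ P, ∀ v, θ v (z - o) = - (φ z - φ o) v := by
    intro z hz
    have : (LinearMap.flip θ (z - o)) = - (φ z - φ o) := by
      apply B.ext
      intro i
      obtain ⟨y, hy, hyB⟩ := hB i
      simp only at hyB
      have : θ (B i) = φ (o + B i) - φ o := B.constr_basis ℝ _ i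
      rw [LinearMap.flip_apply, this, ← hyB, add_sub_cancel, key y hy z hz]
      simp
    intro v
    rw [← LinearMap.flip_apply, this]; simp
  have h2 : ∀ y ∈ P, φ y - φ o = θ (y - o) := by
    intro y hy
    apply LinearMap.ext_on hspan
    rintro _ ⟨z, hz, rfl⟩
    simp only
    rw [h1 z hz, key y hy z hz]
  refine ⟨θ, ?_, ?_⟩
  · intro v w
    have : θ v = - LinearMap.flip θ v := by
      apply LinearMap.ext_on hspan
      rintro _ ⟨z, hz, rfl⟩
      simp only [LinearMap.neg_apply, LinearMap.flip_apply]
      rw [h1 z hz, h2 z hz]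
    rw [this]; simp
  · intro y hy z hz
    have e : y - z = (y - o) - (z - o) := by abel
    rw [e, map_sub, ← h2 y hy, ← h2 z hz]; abel

theorem line_lemma (A : AffineSubspace ℝ V) (o v : V) (ho : o ∉ A) (t t' : ℝ) (h : o + t • v ∈ A)
    (h' : o + t' • v ∈ A) : t = t' := by
  by_contra hne
  apply ho
  have := AffineMap.lineMap_mem (t / (t - t')) h h'
  convert this using 1
  have h0 : t - t' ≠ 0 := sub_ne_zero.2 hne
  rw [AffineMap.lineMap_apply_module]
  match_scalars <;> field_simp <;> ring

theorem two_line (A B : AffineSubspace ℝ V) (o v : V) (hA : o ∉ A) (hB : o ∉ B) :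
    ∃ t : ℝ, t ≠ 0 ∧ o + t • v ∉ A ∧ o + t • v ∉ B := by
  by_contra! H
  have a := line_lemma A o v hA
  have b := line_lemma B o v hB
  have h1 := H 1 (by norm_num)
  have h2 := H 2 (by norm_num)
  have h3 := H 3 (by norm_num)
  by_cases c1 : o + (1:ℝ) • v ∈ A
  · by_cases c2 : o + (2:ℝ) • v ∈ A
    · have := a _ _ c1 c2; norm_num at this
    · by_cases c3 : o + (3:ℝ) • v ∈ A
      · have := a _ _ c1 c3; norm_num at this
      · have := b _ _ (h2 c2) (h3 c3); norm_num at this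
  · by_cases c2 : o + (2:ℝ) • v ∈ A
    · by_cases c3 : o + (3:ℝ) • v ∈ A
      · have := a _ _ c2 c3; norm_num at this
      · have := b _ _ (h1 c1) (h3 c3); norm_num at this
    · have := b _ _ (h1 c1) (h2 c2); norm_num at this

theorem two_exists (A B : AffineSubspace ℝ V) (hA : A ≠ ⊤) (hB : B ≠ ⊤) : ∃ o, o ∉ A ∧ o ∉ B := by
  obtain ⟨p, hp⟩ : ∃ p, p ∉ A := by
    by_contra! h; exact hA (by ext; simp [h])
  obtain ⟨q, hq⟩ : ∃ p, p ∉ B := by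
    by_contra! h; exact hB (by ext; simp [h])
  by_cases hpB : p ∈ B
  · by_cases hqA : q ∈ A
    · refine ⟨p + (1/2 : ℝ) • (q - p), fun h => ?_, fun h => ?_⟩
      · have := line_lemma A p (q - p) hp (1/2) 1 h (by simpa using hqA)
        norm_num at this
      · have := line_lemma B q (p - q) hq (1/2) 1 (by
          convert h using 1; module) (by simpa using hpB)
        norm_num at this
    · exact ⟨q, hqA, hq⟩
  · exact ⟨p, hp, hpB⟩

theorem two_span (A B : AffineSubspace ℝ V) (o : V) (hA : o ∉ A) (hB : o ∉ B) :
    Submodule.span ℝ ((fun y => y - o) '' {y | y ∉ A ∧ y ∉ B}) = ⊤ := by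
  rw [eq_top_iff]
  intro v _
  obtain ⟨t, ht, h1, h2⟩ := two_line A B o v hA hB
  have : v = t⁻¹ • ((o + t • v) - o) := by
    rw [add_sub_cancel_left, smul_smul, inv_mul_cancel₀ ht, one_smul]
  rw [this]
  exact Submodule.smul_mem _ _ (Submodule.subset_span ⟨_, ⟨h1, h2⟩, rfl⟩)

variable {ι : Type*} [Fintype ι] [DecidableEq ι]

theorem range_update (x : ι → V) (j : ι) (y : V) :
    Set.range (update x j y) = insert y (x '' {i | i ≠ j}) := by
  ext z
  simp only [Set.mem_range, Set.mem_insert_iff, Set.mem_image, Set.mem_ofPred_eq]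
  constructor
  · rintro ⟨i, rfl⟩
    by_cases h : i = j
    · subst h; simp
    · right; exact ⟨i, h, by simp [h]⟩
  · rintro (rfl | ⟨i, h, rfl⟩)
    · exact ⟨j, by simp⟩
    · exact ⟨i, by simp [h]⟩

theorem image_update (x : ι → V) (j : ι) (y : V) :
    (update x j y) '' {i | i ≠ j} = x '' {i | i ≠ j} := by
  apply Set.image_congr
  intro i hi
  exact update_of_ne hi _ _

/-- adjoining a vertex -/
theorem ai_update (x : ι → V) (j : ι) (hx : AffineIndependent ℝ x) (y : V) :
    AffineIndependent ℝ (update x j y) ↔ y ∉ affineSpan ℝ (x '' {i | i ≠ j}) := by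
  constructor
  · intro h
    have := h.notMem_affineSpan_sdiff j Set.univ
    rw [update_self] at this
    have e : (Set.univ \ {j} : Set ι) = {i | i ≠ j} := by ext; simp
    rwa [e, image_update] at this
  · intro h
    apply AffineIndependent.affineIndependent_of_notMem_span (i := j)
    · have := hx.subtype {i | i ≠ j}
      have e : (fun i : {i // i ≠ j} => update x j y i) = fun i : {i // i ≠ j} => x i :=
        funext fun i => update_of_ne i.2 _ _
      rw [e]; exact this
    · rw [update_self, image_update]; exact h

variable (c : (ι → V) → V →ₗ[ℝ] Q)

/-- full slide lemma -/
theorem full_slide (hdim : ∀ x : ι → V, affineSpan ℝ (Set.range x) ≠ ⊤)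
    (hs : ∀ x j y, AffineIndependent ℝ x → y ∉ affineSpan ℝ (Set.range x) →
      c x (y - x j) = c (update x j y) (y - x j))
    (x : ι → V) (j : ι) (hx : AffineIndependent ℝ x) (z : V)
    (hz : AffineIndependent ℝ (update x j z)) :
    c x (z - x j) = c (update x j z) (z - x j) := by
  by_cases hzx : z ∉ affineSpan ℝ (Set.range x)
  · exact hs x j z hx hzx
  push Not at hzx
  obtain ⟨w, hw⟩ : ∃ p, p ∉ affineSpan ℝ (Set.range x) := by
    by_contra! h; exact hdim x (by ext; simp [h])
  set y := x j with hy
  have hyx : y ∈ affineSpan ℝ (Set.range x) := mem_affineSpan ℝ ⟨j, rfl⟩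
  have hyr : y ∉ affineSpan ℝ (x '' {i | i ≠ j}) := by
    rw [← ai_update x j hx y, hy, update_eq_self]; exact hx
  obtain ⟨t, ht0, ht1, hq⟩ : ∃ t : ℝ, t ≠ 0 ∧ t ≠ 1 ∧
      y + t • (z - y) ∉ affineSpan ℝ (x '' {i | i ≠ j}) := by
    by_contra! H
    have h1 := H (1/2) (by norm_num) (by norm_num)
    have h2 := H (1/3) (by norm_num) (by norm_num)
    have := line_lemma _ _ _ hyr _ _ h1 h2
    norm_num at this
  set q := y + t • (z - y) with hqd
  have hqx : q ∈ affineSpan ℝ (Set.range x) := by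
    have := AffineMap.lineMap_mem t hyx hzx
    rw [AffineMap.lineMap_apply] at this
    convert this using 1
    rw [hqd]; simp [add_comm]
  have hqa := (ai_update x j hx q).2 hq
  set d := w - y with hd
  have hle : ∀ a, a ∈ affineSpan ℝ (Set.range x) →
      affineSpan ℝ (Set.range (update x j a)) ≤ affineSpan ℝ (Set.range x) := by
    intro a ha
    rw [range_update]
    apply affineSpan_le_of_subset_coe
    rintro _ (rfl | ⟨i, _, rfl⟩)
    · exact ha
    · exact mem_affineSpan ℝ ⟨i, rfl⟩
  have hdd : d ∉ (affineSpan ℝ (Set.range x)).direction := by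
    intro h
    apply hw
    have := AffineSubspace.vadd_mem_of_mem_direction h hyx
    rwa [hd, vadd_eq_add, sub_add_cancel] at this
  have hc : ∀ s : ℝ, s ≠ 0 → q + s • d ∉ affineSpan ℝ (Set.range x) := by
    intro s hs h
    have := AffineSubspace.vsub_mem_direction h hqx
    rw [vsub_eq_sub, add_sub_cancel_left] at this
    exact hdd ((Submodule.smul_mem_iff _ hs).1 this)
  have slide : ∀ a, a ∈ affineSpan ℝ (Set.range x) → AffineIndependent ℝ (update x j a) →
      ∀ s : ℝ, s ≠ 0 → c (update x j a) (q + s • d - a) =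
        c (update x j (q + s • d)) (q + s • d - a) := by
    intro a ha hai s hs0
    have := hs (update x j a) j (q + s • d) hai (fun h => hc s hs0 (hle a ha h))
    simpa using this
  have hy1 := slide y hyx (by rw [hy, update_eq_self]; exact hx) 1 one_ne_zero
  have hy2 := slide y hyx (by rw [hy, update_eq_self]; exact hx) (-1) (by norm_num)
  have hz1 := slide z hzx hz 1 one_ne_zero
  have hz2 := slide z hzx hz (-1) (by norm_num)
  have hq1 := slide q hqx hqa 1 one_ne_zero
  have hq2 := slide q hqx hqa (-1) (by norm_num)
  have hyy : update x j y = x := by rw [hy, update_eq_self]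
  rw [hyy] at hy1 hy2
  generalize c (update x j (q + (1:ℝ) • d)) = C1 at *
  generalize c (update x j (q + (-1:ℝ) • d)) = C2 at *
  generalize c (update x j q) = Cq at *
  generalize c (update x j z) = Z at *
  generalize c x = Y at *
  have e1 : ∀ s : ℝ, q + s • d - y = t • (z - y) + s • d := by intro s; rw [hqd]; module
  have e2 : ∀ s : ℝ, q + s • d - z = (t - 1) • (z - y) + s • d := by intro s; rw [hqd]; module
  have e3 : ∀ s : ℝ, q + s • d - q = s • d := by intro s; module
  rw [e1, map_add, map_add, map_smul, map_smul, map_smul, map_smul] at hy1 hy2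
  rw [e2, map_add, map_add, map_smul, map_smul, map_smul, map_smul] at hz1 hz2
  rw [e3, map_smul, map_smul] at hq1 hq2
  generalize z - y = e at *
  have k1 : C1 d = C2 d := by
    have a1 : Cq d = C1 d := by simpa using hq1
    have a2 : Cq d = C2 d := by simpa using hq2
    rw [← a1, a2]
  have k2 : (2 * t) • Y e = t • (C1 e + C2 e) := by
    have : (2 * t) • Y e = (t • Y e + (1:ℝ) • Y d) + (t • Y e + (-1:ℝ) • Y d) := by module
    rw [this, hy1, hy2, k1]; module
  have k3 : (2 * (t - 1)) • Z e = (t - 1) • (C1 e + C2 e) := by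
    have : (2 * (t-1)) • Z e = ((t-1) • Z e + (1:ℝ) • Z d) + ((t-1) • Z e + (-1:ℝ) • Z d) := by
      module
    rw [this, hz1, hz2, k1]; module
  have k4 : (2:ℝ) • Y e = C1 e + C2 e := by
    apply smul_right_injective Q ht0
    simp only; rw [← k2]; module
  have k5 : (2:ℝ) • Z e = C1 e + C2 e := by
    apply smul_right_injective Q (sub_ne_zero.2 ht1)
    simp only; rw [← k3]; module
  apply smul_right_injective Q (two_ne_zero (α := ℝ))
  simp only; rw [k4, k5]


theorem span_update (hdim : ∀ x : ι → V, affineSpan ℝ (Set.range x) ≠ ⊤) (x : ι → V) (j : ι) :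
    affineSpan ℝ (x '' {i | i ≠ j}) ≠ ⊤ := by
  intro h
  apply hdim x
  rw [eq_top_iff, ← h]
  exact affineSpan_mono ℝ (Set.image_subset_range _ _)

theorem lemmaA (hdim : ∀ x : ι → V, affineSpan ℝ (Set.range x) ≠ ⊤)
    (hs : ∀ x j y, AffineIndependent ℝ x → y ∉ affineSpan ℝ (Set.range x) →
      c x (y - x j) = c (update x j y) (y - x j))
    (x : ι → V) (j : ι) (hx : AffineIndependent ℝ x) :
    ∃ D : V →ₗ[ℝ] V →ₗ[ℝ] Q, (∀ v w, D v w = - D w v) ∧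
      ∀ y z, AffineIndependent ℝ (update x j y) → AffineIndependent ℝ (update x j z) →
        c (update x j y) - c (update x j z) = D (y - z) := by
  have hxj : x j ∉ affineSpan ℝ (x '' {i | i ≠ j}) := by
    rw [← ai_update x j hx, update_eq_self]; exact hx
  obtain ⟨D, h1, h2⟩ := ext_lemma {y | AffineIndependent ℝ (update x j y)} (x j)
    (by simpa using hx) (by
      have := two_span (affineSpan ℝ (x '' {i | i ≠ j})) (affineSpan ℝ (x '' {i | i ≠ j})) (x j)
        hxj hxj
      simp only [and_self] at this
      simp only [ai_update x j hx]
      exact this) (fun y => c (update x j y)) (by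
      intro y hy z hz
      have := full_slide c hdim hs (update x j y) j hy z (by simpa using hz)
      simpa using this)
  exact ⟨D, h1, fun y z hy hz => h2 y hy z hz⟩

theorem swap_update (x : ι → V) {i j : ι} (hij : i ≠ j) (a b : V) :
    update (update x i a) j b ∘ Equiv.swap i j = update (update x i b) j a := by
  funext k
  simp only [Function.comp_apply]
  by_cases hki : k = i
  · subst hki; simp [hij]
  by_cases hkj : k = j
  · subst hkj; simp [hij]
  rw [Equiv.swap_apply_of_ne_of_ne hki hkj]
  simp [hki, hkj]

theorem lemmaB (hdim : ∀ x : ι → V, affineSpan ℝ (Set.range x) ≠ ⊤)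
    (hs : ∀ x j y, AffineIndependent ℝ x → y ∉ affineSpan ℝ (Set.range x) →
      c x (y - x j) = c (update x j y) (y - x j))
    (hperm : ∀ x i j, c (x ∘ Equiv.swap i j) = c x)
    (x : ι → V) {i j : ι} (hij : i ≠ j) (hx : AffineIndependent ℝ x)
    (Di Dj : V →ₗ[ℝ] V →ₗ[ℝ] Q)
    (hDi : ∀ y z, AffineIndependent ℝ (update x i y) → AffineIndependent ℝ (update x i z) →
        c (update x i y) - c (update x i z) = Di (y - z))
    (hDj : ∀ y z, AffineIndependent ℝ (update x j y) → AffineIndependent ℝ (update x j z) →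
        c (update x j y) - c (update x j z) = Dj (y - z)) :
    Di = Dj := by
  classical
  let φ : V → V → V →ₗ[ℝ] Q := fun a b => c (update (update x i a) j b)
  let R : V → V → Prop := fun a b => AffineIndependent ℝ (update (update x i a) j b)
  have φsymm : ∀ a b, φ a b = φ b a := by
    intro a b
    have := hperm (update (update x i a) j b) i j
    rw [swap_update x hij] at this
    exact this.symm
  have Rsymm : ∀ a b, R a b → R b a := by
    intro a b h
    have := h.comp_embedding (Equiv.swap i j).toEmbedding
    have e : (update (update x i a) j b) ∘ (Equiv.swap i j).toEmbedding =
      update (update x i b) j a := swap_update x hij a b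
    rw [e] at this
    exact this
  have Rchar : ∀ a, (∃ b, R a b) → ∀ b, R a b ↔
      b ∉ affineSpan ℝ ((update x i a) '' {i | i ≠ j}) := by
    rintro a ⟨b0, h0⟩ b
    have := ai_update _ j h0 b
    rw [update_idem, image_update] at this
    exact this
  let P : Set V := {a | ∃ b, R a b}
  have hD : ∀ a, a ∈ P → ∃ D : V →ₗ[ℝ] V →ₗ[ℝ] Q, (∀ v w, D v w = - D w v) ∧
      ∀ y z, R a y → R a z → φ a y - φ a z = D (y - z) := by
    rintro a ⟨b0, h0⟩
    obtain ⟨D, h1, h2⟩ := lemmaA c hdim hs _ j h0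
    refine ⟨D, h1, fun y z hy hz => ?_⟩
    have := h2 y z (by simpa using hy) (by simpa using hz)
    simpa using this
  choose! D hanti hDφ using hD
  -- common spanning
  have hcommon : ∀ a ∈ P, ∀ a' ∈ P, ∃ b, R a b ∧ R a' b ∧
      Submodule.span ℝ ((fun y => y - b) '' {y | R a y ∧ R a' y}) = ⊤ := by
    intro a ha a' ha'
    obtain ⟨b, hb, hb'⟩ := two_exists (affineSpan ℝ ((update x i a) '' {i | i ≠ j}))
      (affineSpan ℝ ((update x i a') '' {i | i ≠ j})) (span_update hdim _ _) (span_update hdim _ _)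
    refine ⟨b, (Rchar a ha b).2 hb, (Rchar a' ha' b).2 hb', ?_⟩
    have := two_span _ _ b hb hb'
    simp only [Rchar a ha, Rchar a' ha']
    exact this
  have four : ∀ a ∈ P, ∀ a' ∈ P, ∀ b b', R a b → R a' b → R a b' → R a' b' →
      (D a - D a') (b - b') = (D b - D b') (a - a') := by
    intro a ha a' ha' b b' h1 h2 h3 h4
    have e1 := hDφ a ha b b' h1 h3
    have e2 := hDφ a' ha' b b' h2 h4
    have e3 := hDφ b ⟨a, Rsymm _ _ h1⟩ a a' (Rsymm _ _ h1) (Rsymm _ _ h2)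
    have e4 := hDφ b' ⟨a, Rsymm _ _ h3⟩ a a' (Rsymm _ _ h3) (Rsymm _ _ h4)
    rw [LinearMap.sub_apply, LinearMap.sub_apply, ← e1, ← e2, ← e3, ← e4, φsymm b a, φsymm b a',
      φsymm b' a, φsymm b' a']
    abel
  have zero_of : ∀ q : Q, q = - q → q = 0 := by
    intro q hq
    have : (2:ℝ) • q = 0 := by
      rw [two_smul]; nth_rewrite 1 [hq]; simp
    simpa using this
  have hS : ∀ a ∈ P, ∀ a' ∈ P, D a (a' - a) = D a' (a' - a) := by
    intro a ha a' ha'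
    obtain ⟨b, hb, hb', hspan⟩ := hcommon a ha a' ha'
    apply LinearMap.ext_on hspan
    rintro _ ⟨z, ⟨hz, hz'⟩, rfl⟩
    simp only
    have h4 := four a ha a' ha' z b hz hz' hb hb'
    have h5 := congrArg (fun f => f (a' - a)) h4
    simp only [LinearMap.sub_apply] at h5
    have hbP : b ∈ P := ⟨a, Rsymm _ _ hb⟩
    have hzP : z ∈ P := ⟨a, Rsymm _ _ hz⟩
    have e : a - a' = -(a' - a) := by abel
    have z1 : D z (a' - a) (a' - a) = 0 := zero_of _ (hanti z hzP _ _)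
    have z2 : D b (a' - a) (a' - a) = 0 := zero_of _ (hanti b hbP _ _)
    rw [e, map_neg, map_neg, LinearMap.neg_apply, LinearMap.neg_apply, z1, z2] at h5
    rw [hanti a ha, hanti a' ha', neg_inj]
    rw [← sub_eq_zero, h5]; simp
  have hxi : x i ∈ P := ⟨x j, by simpa [R] using hx⟩
  have hxi' : ∀ a, R a (x j) ↔ a ∉ affineSpan ℝ (x '' {k | k ≠ i}) := by
    intro a
    rw [← ai_update x i hx]
    have e : update (update x i a) j (x j) = update x i a := by
      rw [update_comm hij, update_eq_self]
    simp only [R, e]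
  have hspanP : Submodule.span ℝ ((fun y => y - x i) '' P) = ⊤ := by
    have h0 := (hxi' (x i)).1 (by simpa [R] using hx)
    have := two_span _ _ (x i) h0 h0
    rw [eq_top_iff, ← this]
    apply Submodule.span_mono
    apply Set.image_mono
    intro y hy
    exact ⟨x j, (hxi' y).2 hy.1⟩
  obtain ⟨Θ, hΘ1, hΘ2⟩ := ext_lemma P (x i) hxi hspanP D hS
  have hconst : ∀ a ∈ P, ∀ a' ∈ P, D a = D a' := by
    intro a ha a' ha'
    obtain ⟨b, hb, hb', hspan⟩ := hcommon a ha a' ha'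
    apply LinearMap.ext_on hspan
    rintro _ ⟨z, ⟨hz, hz'⟩, rfl⟩
    simp only
    have h4 := four a ha a' ha' z b hz hz' hb hb'
    have hbP : b ∈ P := ⟨a, Rsymm _ _ hb⟩
    have hzP : z ∈ P := ⟨a, Rsymm _ _ hz⟩
    rw [hΘ2 z hzP b hbP, hΘ1, ← hΘ2 a ha a' ha'] at h4
    ext f
    rw [← sub_eq_zero]
    apply zero_of
    have := congrArg (fun g => g f) h4
    simpa using this
  have hxj : x j ∈ P := ⟨x i, Rsymm _ _ (by simpa [R] using hx)⟩
  have uniq : ∀ (a : V) (ha : a ∈ P) (D' : V →ₗ[ℝ] V →ₗ[ℝ] Q),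
      (∀ y z, R a y → R a z → φ a y - φ a z = D' (y - z)) → D' = D a := by
    intro a ha D' h
    obtain ⟨b, hb, hb', hspan⟩ := hcommon a ha a ha
    apply LinearMap.ext_on hspan
    rintro _ ⟨z, ⟨hz, hz'⟩, rfl⟩
    simp only
    rw [← h _ _ hz hb, hDφ a ha _ _ hz hb]
  have E1 : Dj = D (x i) := by
    apply uniq _ hxi
    intro y z hy hz
    simp only [R, φ, update_eq_self] at hy hz ⊢
    exact hDj y z hy hz
  have E2 : Di = D (x j) := by
    apply uniq _ hxj
    intro y z hy hz
    rw [φsymm _ y, φsymm _ z]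
    have hy := Rsymm _ _ hy
    have hz := Rsymm _ _ hz
    have e : ∀ a, update (update x i a) j (x j) = update x i a := by
      intro a
      rw [update_comm hij, update_eq_self]
    simp only [R, φ, e] at hy hz ⊢
    exact hDi y z hy hz
  rw [E1, E2, hconst _ hxi _ hxj]

def Good (D : V →ₗ[ℝ] V →ₗ[ℝ] Q) (x : ι → V) : Prop :=
  ∀ i y, AffineIndependent ℝ (update x i y) → c (update x i y) - c x = D (y - x i)

theorem exists_good [Nonempty ι] (hdim : ∀ x : ι → V, affineSpan ℝ (Set.range x) ≠ ⊤)
    (hs : ∀ x j y, AffineIndependent ℝ x → y ∉ affineSpan ℝ (Set.range x) →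
      c x (y - x j) = c (update x j y) (y - x j))
    (hperm : ∀ x i j, c (x ∘ Equiv.swap i j) = c x)
    (x : ι → V) (hx : AffineIndependent ℝ x) :
    ∃ D : V →ₗ[ℝ] V →ₗ[ℝ] Q, (∀ v w, D v w = - D w v) ∧ Good c D x := by
  choose D h1 h2 using fun j => lemmaA c hdim hs x j hx
  obtain ⟨j⟩ := ‹Nonempty ι›
  refine ⟨D j, h1 j, ?_⟩
  intro i y hy
  have : D j = D i := by
    by_cases h : j = i
    · rw [h]
    · exact lemmaB c hdim hs hperm x h hx _ _ (h2 j) (h2 i)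
  rw [this, ← h2 i y (x i) hy (by simpa using hx), update_eq_self]

theorem good_update [Nonempty ι] (hdim : ∀ x : ι → V, affineSpan ℝ (Set.range x) ≠ ⊤)
    (hs : ∀ x j y, AffineIndependent ℝ x → y ∉ affineSpan ℝ (Set.range x) →
      c x (y - x j) = c (update x j y) (y - x j))
    (hperm : ∀ x i j, c (x ∘ Equiv.swap i j) = c x)
    (x : ι → V) (hx : AffineIndependent ℝ x) (D : V →ₗ[ℝ] V →ₗ[ℝ] Q) (hD : Good c D x)
    (i : ι) (z : V) (hz : AffineIndependent ℝ (update x i z)) : Good c D (update x i z) := by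
  obtain ⟨D', _, h'⟩ := exists_good c hdim hs hperm _ hz
  suffices D' = D by rw [← this]; exact h'
  have hzA := (ai_update x i hx z).1 hz
  apply LinearMap.ext_on (two_span _ _ z hzA hzA)
  rintro _ ⟨y, ⟨hy, _⟩, rfl⟩
  simp only
  have hy := (ai_update x i hx y).2 hy
  have e1 := h' i y (by simpa using hy)
  have e2 := hD i y hy
  have e3 := hD i z hz
  simp only [update_idem, update_self] at e1
  rw [← e1]
  have : y - z = (y - x i) - (z - x i) := by abel
  rw [this, map_sub, ← e2, ← e3]; abel

theorem sum_update (x : ι → V) (i : ι) (z : V) :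
    ∑ k, update x i z k = ∑ k, x k + (z - x i) := by
  rw [Finset.sum_update_of_mem (Finset.mem_univ i), ← Finset.add_sum_erase _ x (Finset.mem_univ i),
    Finset.sdiff_singleton_eq_erase]
  abel

theorem connect [Nonempty ι] (hdim : ∀ x : ι → V, affineSpan ℝ (Set.range x) ≠ ⊤)
    (hs : ∀ x j y, AffineIndependent ℝ x → y ∉ affineSpan ℝ (Set.range x) →
      c x (y - x j) = c (update x j y) (y - x j))
    (hperm : ∀ x i j, c (x ∘ Equiv.swap i j) = c x)
    (D : V →ₗ[ℝ] V →ₗ[ℝ] Q) (S : Finset ι) :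
    ∀ (x x' : ι → V), AffineIndependent ℝ x → AffineIndependent ℝ x' → Good c D x →
      (∀ i, i ∉ S → x i = x' i) →
      Good c D x' ∧ c x' - c x = D (∑ k, x' k - ∑ k, x k) := by
  induction S using Finset.induction_on with
  | empty =>
    intro x x' hx hx' hD h
    have : x = x' := funext fun i => h i (by simp)
    subst this
    exact ⟨hD, by simp⟩
  | insert i S hi ih =>
    intro x x' hx hx' hD h
    obtain ⟨z, hz, hz'⟩ := two_exists (affineSpan ℝ (x '' {k | k ≠ i}))
      (affineSpan ℝ (Set.image x' {k | k ≠ i})) (span_update hdim _ _) (span_update hdim _ _)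
    have hz := (ai_update x i hx z).2 hz
    have hz' := (ai_update x' i hx' z).2 hz'
    have g := good_update c hdim hs hperm x hx D hD i z hz
    obtain ⟨g', e⟩ := ih _ _ hz hz' g (by
      intro k hk
      by_cases hki : k = i
      · subst hki; simp
      · simp only [update_of_ne hki]
        exact h k (by simp [hki, hk]))
    have g'' := good_update c hdim hs hperm _ hz' D g' i (x' i) (by simpa using hx')
    rw [update_idem, update_eq_self] at g''
    refine ⟨g'', ?_⟩
    have e1 := hD i z hz
    have e2 := g'' i z hz'
    have e3 : c x' - c x = (c (update x' i z) - c (update x i z)) + (c (update x i z) - c x)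
      - (c (update x' i z) - c x') := by abel
    rw [e3, e, e1, e2, ← map_add, ← map_sub, sum_update, sum_update]
    congr 1; abel

theorem alg_main [Nonempty ι] (hdim : ∀ x : ι → V, affineSpan ℝ (Set.range x) ≠ ⊤)
    (hs : ∀ x j y, AffineIndependent ℝ x → y ∉ affineSpan ℝ (Set.range x) →
      c x (y - x j) = c (update x j y) (y - x j))
    (hperm : ∀ x i j, c (x ∘ Equiv.swap i j) = c x)
    {l : ℕ} (s : Fin l → ι → V) (hsi : ∀ i, AffineIndependent ℝ (s i)) (g : Fin l → V)
    (hg : ∑ i, g i = 0)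
    (hw : ∀ D : V →ₗ[ℝ] V →ₗ[ℝ] Q, (∀ v w, D v w = - D w v) → ∑ i, D (∑ k, s i k) (g i) = 0) :
    ∑ i, c (s i) (g i) = 0 := by
  rcases l with _ | l
  · simp
  obtain ⟨D, h1, h2⟩ := exists_good c hdim hs hperm (s 0) (hsi 0)
  have : ∀ i, c (s i) (g i) = c (s 0) (g i) + (D (∑ k, s i k) (g i) - D (∑ k, s 0 k) (g i)) := by
    intro i
    have := (connect c hdim hs hperm D Finset.univ (s 0) (s i) (hsi 0) (hsi i) h2 (by simp)).2
    have := congrArg (fun f => f (g i)) this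
    simp only [LinearMap.sub_apply, map_sub] at this
    rw [← this]; abel
  rw [Finset.sum_congr rfl fun i _ => this i, Finset.sum_add_distrib, Finset.sum_sub_distrib,
    hw D h1, ← map_sum, ← map_sum, hg]
  simp

end Alg

section Geo
set_option linter.unusedSectionVars false
open Function Module

variable {n : ℕ} {ι : Type*} [Fintype ι] [DecidableEq ι]

theorem simplex_sub (W : Submodule ℝ (Euc n)) (p : Euc n) (z : ι → W) (d : ℝ) (hd : 0 ≤ d) :
    μH[d] (simplexSet fun i => p + (z i : Euc n)) = μH[d] (convexHull ℝ (Set.range z)) := by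
  let f : W →ᵃ[ℝ] Euc n :=
    (AffineEquiv.constVAdd ℝ (Euc n) p).toAffineMap.comp W.subtype.toAffineMap
  have hf : Isometry f := by
    have h1 : Isometry (fun w : W => (w : Euc n)) := isometry_subtype_coe
    have h2 : Isometry (fun w : Euc n => p + w) := isometry_add_left p
    exact h2.comp h1
  have e : simplexSet (fun i => p + (z i : Euc n)) = f '' convexHull ℝ (Set.range z) := by
    rw [AffineMap.image_convexHull, ← Set.range_comp]
    rfl
  rw [e, hf.hausdorffMeasure_image (Or.inl hd)]

theorem simplex_pos_fin (x : ι → Euc n) (hx : AffineIndependent ℝ x) (d : ℕ)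
    (hd : Fintype.card ι = d + 1) :
    0 < μH[(d : ℝ)] (simplexSet x) ∧ μH[(d : ℝ)] (simplexSet x) < ⊤ := by
  have : Nonempty ι := Fintype.card_pos_iff.1 (by omega)
  obtain ⟨i0⟩ := this
  have hfr : finrank ℝ (vectorSpan ℝ (Set.range x)) = d := hx.finrank_vectorSpan hd
  let z : ι → vectorSpan ℝ (Set.range x) := fun i =>
    ⟨x i - x i0, vsub_mem_vectorSpan ℝ ⟨i, rfl⟩ ⟨i0, rfl⟩⟩
  have e : x = fun i => x i0 + (z i : Euc n) := by funext i; simp [z]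
  have key := simplex_sub (vectorSpan ℝ (Set.range x)) (x i0) z d (by positivity)
  rw [← e] at key
  rw [key]
  have hHaar : (μH[(d : ℝ)] : Measure (vectorSpan ℝ (Set.range x))).IsAddHaarMeasure := by
    rw [← hfr]; infer_instance
  constructor
  · have hz : AffineIndependent ℝ z := by
      have h2 : AffineIndependent ℝ (fun i => (z i : Euc n)) := by
        have := hx.map' (AffineEquiv.constVAdd ℝ (Euc n) (-x i0)).toAffineMap
          (AffineEquiv.constVAdd ℝ (Euc n) (-x i0)).injective
        convert this using 1
        funext i
        simp [z]; abel
      exact AffineIndependent.of_comp (vectorSpan ℝ (Set.range x)).subtype.toAffineMap h2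
    have htop : affineSpan ℝ (Set.range z) = ⊤ :=
      (hz.affineSpan_eq_top_iff_card_eq_finrank_add_one).2 (by rw [hd, hfr])
    have hinter := interior_convexHull_nonempty_iff_affineSpan_eq_top.2 htop
    exact Measure.measure_pos_of_nonempty_interior _ hinter
  · exact ((Set.finite_range z).isCompact_convexHull ℝ).measure_lt_top

theorem simplex_det (W : Submodule ℝ (Euc n)) (p : Euc n) (z : ι → W) (T : W →ₗ[ℝ] W) (d : ℕ)
    (hfr : finrank ℝ W = d) :
    μH[(d : ℝ)] (simplexSet fun i => p + (T (z i) : Euc n)) =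
      ENNReal.ofReal |LinearMap.det T| * μH[(d : ℝ)] (simplexSet fun i => p + (z i : Euc n)) := by
  have hHaar : (μH[(d : ℝ)] : Measure W).IsAddHaarMeasure := by
    rw [← hfr]; infer_instance
  rw [simplex_sub W p z d (by positivity), simplex_sub W p (fun i => T (z i)) d (by positivity),
    ← Measure.addHaar_image_linearMap, LinearMap.image_convexHull, ← Set.range_comp]
  rfl

/-- the submodule spanned by the vertices other than `j` -/
def offSpan (x : ι → Euc n) (j i0 : ι) : Submodule ℝ (Euc n) :=
  Submodule.span ℝ ((fun k => x k - x i0) '' {k | k ≠ j})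

theorem offSpan_update (x : ι → Euc n) {j i0 : ι} (h : i0 ≠ j) (y : Euc n) :
    offSpan (update x j y) j i0 = offSpan x j i0 := by
  unfold offSpan
  congr 1
  apply Set.image_congr
  intro k hk
  rw [update_of_ne h, update_of_ne hk]

theorem offSpan_le (x : ι → Euc n) (j i0 : ι) : offSpan x j i0 ≤ vectorSpan ℝ (Set.range x) := by
  unfold offSpan
  rw [Submodule.span_le]
  rintro _ ⟨k, _, rfl⟩
  exact vsub_mem_vectorSpan ℝ ⟨k, rfl⟩ ⟨i0, rfl⟩

theorem mem_offSpan (x : ι → Euc n) {j k : ι} (i0 : ι) (h : k ≠ j) :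
    x k - x i0 ∈ offSpan x j i0 := Submodule.subset_span ⟨k, h, rfl⟩

theorem simplex_height (x : ι → Euc n) (hx : AffineIndependent ℝ x) (d : ℕ)
    (hd : Fintype.card ι = d + 1) {j i0 : ι} (hij : i0 ≠ j) (β : Euc n) (hβ0 : β ≠ 0)
    (hβ : ∀ w ∈ offSpan x j i0, ⟪β, w⟫ = 0) (hβx : x j - x i0 - β ∈ offSpan x j i0) :
    μH[(d : ℝ)] (simplexSet x) = ENNReal.ofReal ‖β‖ *
      μH[(d : ℝ)] (simplexSet (update x j (x i0 + ‖β‖⁻¹ • β))) := by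
  set W := vectorSpan ℝ (Set.range x) with hW
  have hfr : finrank ℝ W = d := hx.finrank_vectorSpan hd
  have hxW : ∀ k, x k - x i0 ∈ W := fun k => vsub_mem_vectorSpan ℝ ⟨k, rfl⟩ ⟨i0, rfl⟩
  have hβW : β ∈ W := by
    have := W.sub_mem (hxW j) (offSpan_le x j i0 hβx)
    rwa [sub_sub_cancel] at this
  have hn : ‖β‖ ≠ 0 := norm_ne_zero_iff.2 hβ0
  let e : W := ⟨‖β‖⁻¹ • β, W.smul_mem _ hβW⟩
  let f : Module.Dual ℝ W := (innerSL ℝ (‖β‖⁻¹ • β)).toLinearMap ∘ₗ W.subtype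
  have hf : ∀ w : W, f w = ‖β‖⁻¹ * ⟪β, (w : Euc n)⟫ := by
    intro w
    simp [f]
  let z : ι → W := fun k => if k = j then e else ⟨x k - x i0, hxW k⟩
  let u : W := ⟨x j - x i0, hxW j⟩ - e
  let T := LinearMap.transvection f u
  have hfe : f e = 1 := by
    rw [hf]
    simp only [e, inner_smul_right, real_inner_self_eq_norm_sq]
    field_simp
  have hxj : ⟪β, x j - x i0⟫ = ‖β‖ ^ 2 := by
    have := hβ _ hβx
    rw [inner_sub_right, real_inner_self_eq_norm_sq] at this
    linarith
  have hdet : LinearMap.det T = ‖β‖ := by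
    rw [LinearMap.transvection.det, map_sub, hfe, hf]
    simp only [hxj]
    field_simp; ring
  have e1 : (fun k => x i0 + (T (z k) : Euc n)) = x := by
    funext k
    by_cases hk : k = j
    · subst hk
      simp [z, T, LinearMap.transvection, hfe, u]
    · have : f (z k) = 0 := by
        rw [hf]; simp only [z, hk, if_false]
        rw [hβ _ (mem_offSpan x i0 hk)]; simp
      simp only [T, LinearMap.transvection.apply, this]
      simp [z, hk]
  have e2 : (fun k => x i0 + (z k : Euc n)) = update x j (x i0 + ‖β‖⁻¹ • β) := by
    funext k
    by_cases hk : k = j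
    · subst hk; simp [z, e]
    · simp [z, hk]
  have := simplex_det W (x i0) z T d hfr
  rw [e1, e2, hdet, abs_of_nonneg (norm_nonneg _)] at this
  exact this

theorem simplex_reflect (x : ι → Euc n) (d : ℝ) (hd : 0 ≤ d) {j i0 : ι} (hij : i0 ≠ j)
    (e e' : Euc n) (hee : ‖e‖ = ‖e'‖)
    (he : ∀ w ∈ offSpan x j i0, ⟪e, w⟫ = 0) (he' : ∀ w ∈ offSpan x j i0, ⟪e', w⟫ = 0) :
    μH[d] (simplexSet (update x j (x i0 + e))) = μH[d] (simplexSet (update x j (x i0 + e'))) := by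
  let ρ : Euc n ≃ₗᵢ[ℝ] Euc n := Submodule.reflection (Submodule.span ℝ {e - e'})ᗮ
  have hρ : ρ e = e' := Submodule.reflection_sub hee
  let f : Euc n →ᵃ[ℝ] Euc n := (AffineEquiv.constVAdd ℝ (Euc n) (x i0)).toAffineMap.comp
    (ρ.toLinearEquiv.toLinearMap.toAffineMap.comp
      (AffineEquiv.constVAdd ℝ (Euc n) (-x i0)).toAffineMap)
  have hfa : ∀ v, f v = x i0 + ρ (-x i0 + v) := fun v => rfl
  have hf : Isometry f := by
    have h2 : Isometry (fun w : Euc n => x i0 + w) := isometry_add_left _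
    have h1 : Isometry (fun w : Euc n => -x i0 + w) := isometry_add_left _
    exact h2.comp (ρ.isometry.comp h1)
  have e1 : simplexSet (update x j (x i0 + e')) = f '' simplexSet (update x j (x i0 + e)) := by
    unfold simplexSet
    rw [AffineMap.image_convexHull, ← Set.range_comp]
    congr 2
    funext k
    simp only [Function.comp_apply, hfa]
    by_cases hk : k = j
    · subst hk; simp [hρ]
    · rw [update_of_ne hk, update_of_ne hk]
      have : ρ (-x i0 + x k) = -x i0 + x k := by
        apply Submodule.reflection_mem_subspace_eq_self
        rw [Submodule.mem_orthogonal_singleton_iff_inner_right, inner_sub_left]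
        have hm := mem_offSpan x i0 hk
        rw [neg_add_eq_sub, he _ hm, he' _ hm, sub_zero]
      rw [this]; abel
  rw [e1, hf.hausdorffMeasure_image (Or.inl hd)]

theorem vectorSpan_le' (x : ι → Euc n) (i0 : ι) (K : Submodule ℝ (Euc n))
    (h : ∀ k, x k - x i0 ∈ K) : vectorSpan ℝ (Set.range x) ≤ K := by
  rw [vectorSpan_range_eq_span_range_vsub_right ℝ x i0, Submodule.span_le]
  rintro _ ⟨k, rfl⟩
  exact h k

theorem geo (x : ι → Euc n) {j i0 : ι} (hij : i0 ≠ j) (y β β' : Euc n)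
    (hβ : ∀ w ∈ offSpan x j i0, ⟪β, w⟫ = 0) (hβ' : ∀ w ∈ offSpan x j i0, ⟪β', w⟫ = 0)
    (hβx : x j - x i0 - β ∈ offSpan x j i0) (hβy : y - x i0 - β' ∈ offSpan x j i0)
    (h0 : β ≠ 0) (hy : y ∉ affineSpan ℝ (Set.range x)) :
    ∃ u : Euc n, u ≠ 0 ∧ (∀ w ∈ vectorSpan ℝ (Set.range x), ⟪u, w⟫ = 0) ∧
      y - x j - u ∈ vectorSpan ℝ (Set.range x) ∧
      (‖u‖ * ‖β‖) ^ 2 = ‖β‖ ^ 2 * ‖β'‖ ^ 2 - ⟪β, β'⟫ ^ 2 := by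
  have hn : ‖β‖ ≠ 0 := norm_ne_zero_iff.2 h0
  set t : ℝ := ⟪β, β'⟫ / ‖β‖ ^ 2 with ht
  set W := vectorSpan ℝ (Set.range x) with hW
  have hxW : ∀ k, x k - x i0 ∈ W := fun k => vsub_mem_vectorSpan ℝ ⟨k, rfl⟩ ⟨i0, rfl⟩
  have hβW : β ∈ W := by
    have := W.sub_mem (hxW j) (offSpan_le x j i0 hβx)
    rwa [sub_sub_cancel] at this
  have huβ : ⟪β' - t • β, β⟫ = 0 := by
    rw [inner_sub_left, inner_smul_left, real_inner_self_eq_norm_sq, real_inner_comm, ht]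
    simp; field_simp; simp
  have huR : ∀ w ∈ offSpan x j i0, ⟪β' - t • β, w⟫ = 0 := by
    intro w hw
    rw [inner_sub_left, inner_smul_left, hβ w hw, hβ' w hw]; simp
  have hdiff : y - x j - (β' - t • β) ∈ W := by
    have : y - x j - (β' - t • β) = (y - x i0 - β') - (x j - x i0) + t • β := by module
    rw [this]
    exact W.add_mem (W.sub_mem (offSpan_le x j i0 hβy) (hxW j)) (W.smul_mem _ hβW)
  refine ⟨β' - t • β, ?_, ?_, hdiff, ?_⟩
  · intro hu
    rw [hu, sub_zero] at hdiff
    apply hy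
    have := AffineSubspace.vadd_mem_of_mem_direction (s := affineSpan ℝ (Set.range x))
      (by rwa [direction_affineSpan]) (mem_affineSpan ℝ (Set.mem_range_self j))
    rwa [vadd_eq_add, sub_add_cancel] at this
  · intro w hw
    have : W ≤ (Submodule.span ℝ {β' - t • β})ᗮ := by
      apply vectorSpan_le' x i0
      intro k
      rw [Submodule.mem_orthogonal_singleton_iff_inner_right]
      by_cases hk : k = j
      · subst hk
        have := huR _ hβx
        rwa [inner_sub_right, huβ, sub_zero] at this
      · exact huR _ (mem_offSpan x i0 hk)
    have := this hw
    rwa [Submodule.mem_orthogonal_singleton_iff_inner_right] at this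
  · have : ‖β' - t • β‖ ^ 2 = ‖β'‖ ^ 2 - t * ⟪β, β'⟫ := by
      rw [← real_inner_self_eq_norm_sq]
      nth_rewrite 2 [sub_eq_add_neg]
      rw [inner_add_right, inner_neg_right, inner_smul_right, huβ, inner_sub_left, inner_smul_left,
        real_inner_self_eq_norm_sq]
      simp
    rw [mul_pow, this, ht]
    field_simp

theorem conormal_eq {K : ℕ} (b : Fin K → Euc n) {i i' : Fin K} (hii : i' ≠ i) (u : Euc n)
    (hu0 : u ≠ 0) (hu : ∀ w ∈ vectorSpan ℝ (Set.range (face b i)), ⟪u, w⟫ = 0)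
    (hd : b i - b i' - u ∈ vectorSpan ℝ (Set.range (face b i))) :
    conormal b i = -(‖u‖⁻¹ • u) := by
  set W := vectorSpan ℝ (Set.range (face b i)) with hW
  have hn : ‖u‖ ≠ 0 := norm_ne_zero_iff.2 hu0
  have hnp : 0 < ‖u‖ := norm_pos_iff.2 hu0
  have hsub : Set.range (face b i) ⊆ Set.range b := by
    rintro _ ⟨k, rfl⟩; exact ⟨k.1, rfl⟩
  have hWle : W ≤ vectorSpan ℝ (Set.range b) := vectorSpan_mono ℝ hsub
  have huV : u ∈ vectorSpan ℝ (Set.range b) := by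
    have h1 : b i - b i' ∈ vectorSpan ℝ (Set.range b) := vsub_mem_vectorSpan ℝ ⟨i, rfl⟩ ⟨i', rfl⟩
    have := Submodule.sub_mem _ h1 (hWle hd)
    rwa [sub_sub_cancel] at this
  have hk : ∀ k, k ≠ i → b k - b i' ∈ W := fun k hk =>
    vsub_mem_vectorSpan ℝ ⟨⟨k, hk⟩, rfl⟩ ⟨⟨i', hii⟩, rfl⟩
  have hVle : vectorSpan ℝ (Set.range b) ≤ W ⊔ Submodule.span ℝ {u} := by
    apply vectorSpan_le' b i'
    intro k
    by_cases hki : k = i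
    · subst hki
      have := Submodule.add_mem_sup hd (Submodule.mem_span_singleton_self (R := ℝ) u)
      rwa [sub_add_cancel] at this
    · exact Submodule.mem_sup_left (hk k hki)
  have hbary : bary (face b i) - b i' ∈ W := by
    have hc : (Fintype.card {k : Fin K // k ≠ i} : ℝ) ≠ 0 := by
      have : 0 < Fintype.card {k : Fin K // k ≠ i} := Fintype.card_pos_iff.2 ⟨⟨i', hii⟩⟩
      positivity
    have : bary (face b i) - b i' =
        (Fintype.card {k : Fin K // k ≠ i} : ℝ)⁻¹ • ∑ k : {k : Fin K // k ≠ i}, (b k - b i') := by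
      rw [Finset.sum_sub_distrib, smul_sub, Finset.sum_const, Finset.card_univ,
        ← Nat.cast_smul_eq_nsmul ℝ, smul_smul, inv_mul_cancel₀ hc, one_smul]
      rfl
    rw [this]
    exact W.smul_mem _ (W.sum_mem fun k _ => hk k.1 k.2)
  have hdu : ∀ v : Euc n, (∀ w ∈ W, ⟪v, w⟫ = 0) → ⟪v, b i - bary (face b i)⟫ = ⟪v, u⟫ := by
    intro v hv
    have e : b i - bary (face b i) = (b i - b i' - u) - (bary (face b i) - b i') + u := by abel
    rw [e, inner_add_right, hv _ (W.sub_mem hd hbary), zero_add]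
  have hex : ∃ v, IsConormal b i v := by
    refine ⟨-(‖u‖⁻¹ • u), ?_, ?_, ?_, ?_⟩
    · exact Submodule.neg_mem _ (Submodule.smul_mem _ _ huV)
    · rw [norm_neg, norm_smul, norm_inv, norm_norm, inv_mul_cancel₀ hn]
    · intro w hw
      rw [inner_neg_left, inner_smul_left, hu w hw]; simp
    · rw [hdu]
      · rw [inner_neg_left, inner_smul_left, real_inner_self_eq_norm_sq]
        simp; positivity
      · intro w hw
        rw [inner_neg_left, inner_smul_left, hu w hw]; simp
  have hspec : IsConormal b i (conormal b i) := by
    unfold conormal; rw [dif_pos hex]; exact hex.choose_spec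
  generalize conormal b i = v at hspec
  obtain ⟨hv1, hv2, hv3, hv4⟩ := hspec
  rw [hdu v hv3] at hv4
  obtain ⟨w, hw, a, ha, hwa⟩ := Submodule.mem_sup.1 (hVle hv1)
  obtain ⟨c, rfl⟩ := Submodule.mem_span_singleton.1 ha
  have hw0 : w = 0 := by
    have h1 := hv3 w hw
    rw [← hwa, inner_add_left, inner_smul_left, hu w hw] at h1
    simpa using h1
  rw [hw0, zero_add] at hwa
  subst hwa
  rw [inner_smul_left, real_inner_self_eq_norm_sq] at hv4
  rw [norm_smul, Real.norm_eq_abs] at hv2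
  have hc : c < 0 := by
    simp only [conj_trivial] at hv4
    by_contra h
    push Not at h
    have : 0 ≤ c * ‖u‖ ^ 2 := by positivity
    linarith
  rw [abs_of_neg hc] at hv2
  have : c = -‖u‖⁻¹ := by field_simp; linarith
  rw [this, neg_smul]

theorem conormal_inner_zero {K : ℕ} (b : Fin K → Euc n) (i : Fin K) (v : Euc n)
    (hv : v ∈ vectorSpan ℝ (Set.range (face b i))) : ⟪v, conormal b i⟫ = 0 := by
  unfold conormal
  split_ifs with h
  · rw [real_inner_comm]; exact h.choose_spec.2.2.1 v hv
  · simp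

theorem matVec_rankOne (v w : Euc n) : matVec (rankOne v) w = ⟪v, w⟫ • v := by
  ext p
  simp only [matVec, rankOne, Matrix.toLpLin_apply, Matrix.mulVec, dotProduct, Matrix.of_apply,
    PiLp.smul_apply, smul_eq_mul, PiLp.inner_apply, Finset.sum_mul]
  apply Finset.sum_congr rfl
  intro q _
  simp; ring

theorem range_face_zero {N : ℕ} (x : Fin N → Euc n) (y : Euc n) :
    Set.range (face (Fin.cons y x : Fin (N + 1) → Euc n) 0) = Set.range x := by
  ext z
  constructor
  · rintro ⟨⟨k, hk⟩, rfl⟩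
    obtain ⟨k, rfl⟩ := Fin.exists_succ_eq.2 hk
    exact ⟨k, by simp [face]⟩
  · rintro ⟨k, rfl⟩
    exact ⟨⟨k.succ, Fin.succ_ne_zero k⟩, by simp [face]⟩

theorem range_face_succ {N : ℕ} (x : Fin N → Euc n) (y : Euc n) (j : Fin N) :
    Set.range (face (Fin.cons y x : Fin (N + 1) → Euc n) j.succ) =
      Set.range (update x j y) := by
  ext z
  constructor
  · rintro ⟨⟨k, hk⟩, rfl⟩
    by_cases hk0 : k = 0
    · subst hk0
      exact ⟨j, by simp [face]⟩
    · obtain ⟨k, rfl⟩ := Fin.exists_succ_eq.2 hk0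
      have : k ≠ j := fun h => hk (by rw [h])
      exact ⟨k, by simp [face, this]⟩
  · rintro ⟨k, rfl⟩
    by_cases hk : k = j
    · subst hk
      exact ⟨⟨0, (Fin.succ_ne_zero k).symm⟩, by simp [face]⟩
    · exact ⟨⟨k.succ, fun h => hk (Fin.succ_injective _ h)⟩, by simp [face, hk]⟩

end Geo

section Final
set_option linter.unusedSectionVars false
open Function Module

variable {n : ℕ}

theorem slide_beam {d : ℕ} (hdpos : 1 ≤ d) (x : Fin (d + 1) → Euc n) (j : Fin (d + 1)) (y : Euc n)
    (hx : AffineIndependent ℝ x) (hy : y ∉ affineSpan ℝ (Set.range x)) :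
    ∃ κ : ℝ, 0 < κ ∧ ∀ S : Set (Euc n),
      beam (rankOne (y - x j)) (Fin.cons y x : Fin (d + 2) → Euc n) S =
      (κ * ((μH[(d : ℝ)] (S ∩ simplexSet (update x j y))).toReal /
          (μH[(d : ℝ)] (simplexSet (update x j y))).toReal -
        (μH[(d : ℝ)] (S ∩ simplexSet x)).toReal / (μH[(d : ℝ)] (simplexSet x)).toReal)) •
        (y - x j) := by
  have hcard : Fintype.card (Fin (d + 1)) = d + 1 := Fintype.card_fin _
  obtain ⟨i0, hij⟩ : ∃ i0 : Fin (d + 1), i0 ≠ j := by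
    have : Nontrivial (Fin (d + 1)) := Fin.nontrivial_iff_two_le.2 (by omega)
    exact exists_ne j
  have hyo : y ∉ affineSpan ℝ (x '' {i | i ≠ j}) := fun h =>
    hy (affineSpan_mono ℝ (Set.image_subset_range _ _) h)
  have hx' : AffineIndependent ℝ (update x j y) := (ai_update x j hx y).2 hyo
  set x' := update x j y with hx'd
  have hx'i0 : x' i0 = x i0 := update_of_ne hij _ _
  have hx'j : x' j = y := update_self _ _ _
  have hback : update x' j (x j) = x := by rw [hx'd, update_idem, update_eq_self]
  have hR : offSpan x' j i0 = offSpan x j i0 := offSpan_update x hij y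
  -- `x j` is off the span of `x'`
  have hxj' : x j ∉ affineSpan ℝ (Set.range x') := by
    have hcons : AffineIndependent ℝ (Fin.cons y x : Fin (d + 2) → Euc n) := by
      apply AffineIndependent.affineIndependent_of_notMem_span (i := 0)
      · have h1 := hx.comp_embedding
          (⟨fun k : {k : Fin (d + 2) // k ≠ 0} => k.1.pred k.2, fun a b h =>
            Subtype.ext (Fin.pred_inj.1 h)⟩ : {k : Fin (d + 2) // k ≠ 0} ↪ Fin (d + 1))
        have e : (fun k : {k : Fin (d + 2) // k ≠ 0} => (Fin.cons y x : Fin (d + 2) → Euc n) k) =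
          fun k => x (k.1.pred k.2) := by
          funext ⟨k, hk⟩
          obtain ⟨k, rfl⟩ := Fin.exists_succ_eq.2 hk
          simp
        rw [e]; exact h1
      · have e : (Fin.cons y x : Fin (d + 2) → Euc n) '' {k | k ≠ 0} = Set.range x := by
          rw [← range_face_zero x y]
          ext z; simp [face]
        rw [e]; simpa using hy
    have := hcons.notMem_affineSpan_sdiff j.succ Set.univ
    have e : (Fin.cons y x : Fin (d + 2) → Euc n) '' (Set.univ \ {j.succ}) = Set.range x' := by
      rw [← range_face_succ x y j]
      ext z; simp [face]
    rw [e] at this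
    simpa using this
  -- orthogonal components
  let R := offSpan x j i0
  let β : Euc n := x j - x i0 - R.starProjection (x j - x i0)
  let β' : Euc n := y - x i0 - R.starProjection (y - x i0)
  have hβ : ∀ w ∈ R, ⟪β, w⟫ = 0 := fun w hw => R.starProjection_inner_eq_zero _ w hw
  have hβ' : ∀ w ∈ R, ⟪β', w⟫ = 0 := fun w hw => R.starProjection_inner_eq_zero _ w hw
  have hβx : x j - x i0 - β ∈ R := by
    have : x j - x i0 - β = R.starProjection (x j - x i0) := sub_sub_cancel _ _
    rw [this]; exact R.starProjection_apply_mem _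
  have hβy : y - x i0 - β' ∈ R := by
    have : y - x i0 - β' = R.starProjection (y - x i0) := sub_sub_cancel _ _
    rw [this]; exact R.starProjection_apply_mem _
  have hR2 : R ≤ (affineSpan ℝ (x '' {i | i ≠ j})).direction := by
    rw [direction_affineSpan]
    apply Submodule.span_le.2
    rintro _ ⟨k, hk, rfl⟩
    exact vsub_mem_vectorSpan ℝ ⟨k, hk, rfl⟩ ⟨i0, hij, rfl⟩
  have hoff : ∀ a : Euc n, a ∉ affineSpan ℝ (x '' {i | i ≠ j}) → a - x i0 ∉ R := by
    intro a ha h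
    apply ha
    have := AffineSubspace.vadd_mem_of_mem_direction (hR2 h)
      (mem_affineSpan ℝ (Set.mem_image_of_mem x hij))
    rwa [vadd_eq_add, sub_add_cancel] at this
  have hxo : x j ∉ affineSpan ℝ (x '' {i | i ≠ j}) := by
    rw [← ai_update x j hx, update_eq_self]; exact hx
  have hβ0 : β ≠ 0 := by
    intro h; rw [h, sub_zero] at hβx; exact hoff _ hxo hβx
  have hβ'0 : β' ≠ 0 := by
    intro h; rw [h, sub_zero] at hβy; exact hoff _ hyo hβy
  obtain ⟨u, hu0, hu1, hu2, hu3⟩ := geo x hij y β β' hβ hβ' hβx hβy hβ0 hy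
  obtain ⟨u', hu0', hu1', hu2', hu3'⟩ := geo x' hij (x j) β' β (by rw [hR]; exact hβ')
    (by rw [hR]; exact hβ) (by rw [hR, hx'j, hx'i0]; exact hβy)
    (by rw [hR, hx'i0]; exact hβx) hβ'0 hxj'
  rw [hx'j] at hu2'
  -- heights
  have hh : ‖u‖ * ‖β‖ = ‖u'‖ * ‖β'‖ := by
    have : (‖u‖ * ‖β‖) ^ 2 = (‖u'‖ * ‖β'‖) ^ 2 := by
      rw [hu3, hu3', real_inner_comm]; ring
    exact (pow_left_inj₀ (by positivity) (by positivity) two_ne_zero).1 this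
  have hm1 := simplex_height x hx d hcard hij β hβ0 hβ hβx
  have hm2 := simplex_height x' hx' d hcard hij β' hβ'0 (by rw [hR]; exact hβ')
    (by rw [hR, hx'j, hx'i0]; exact hβy)
  rw [hx'i0, hx'd, update_idem, ← hx'd] at hm2
  have hm3 := simplex_reflect x d (by positivity) hij (‖β‖⁻¹ • β) (‖β'‖⁻¹ • β')
    (by rw [norm_smul, norm_smul, norm_inv, norm_inv, norm_norm, norm_norm,
          inv_mul_cancel₀ (norm_ne_zero_iff.2 hβ0), inv_mul_cancel₀ (norm_ne_zero_iff.2 hβ'0)])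
    (fun w hw => by rw [inner_smul_left, hβ w hw, mul_zero])
    (fun w hw => by rw [inner_smul_left, hβ' w hw, mul_zero])
  rw [← hm3] at hm2
  generalize μH[(d : ℝ)] (simplexSet (update x j (x i0 + ‖β‖⁻¹ • β))) = M at hm1 hm2
  obtain ⟨hp, hf⟩ := simplex_pos_fin x hx d hcard
  obtain ⟨hp', hf'⟩ := simplex_pos_fin x' hx' d hcard
  have hP := ENNReal.toReal_pos hp.ne' hf.ne
  have hP' := ENNReal.toReal_pos hp'.ne' hf'.ne
  have hmm : ‖u‖ * (μH[(d : ℝ)] (simplexSet x)).toReal =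
      ‖u'‖ * (μH[(d : ℝ)] (simplexSet x')).toReal := by
    rw [hm1, hm2, ENNReal.toReal_mul, ENNReal.toReal_mul, ENNReal.toReal_ofReal (norm_nonneg _),
      ENNReal.toReal_ofReal (norm_nonneg _), ← mul_assoc, hh, mul_assoc]
  have hun : 0 < ‖u‖ := norm_pos_iff.2 hu0
  have hun' : 0 < ‖u'‖ := norm_pos_iff.2 hu0'
  refine ⟨‖u‖ * (μH[(d : ℝ)] (simplexSet x)).toReal, by positivity, ?_⟩
  intro S
  set b : Fin (d + 2) → Euc n := Fin.cons y x with hb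
  have hb0 : b 0 = y := rfl
  have hbs : ∀ k, b (Fin.succ k) = x k := fun k => by simp [hb]
  have r0 : Set.range (face b 0) = Set.range x := range_face_zero x y
  have rj : Set.range (face b j.succ) = Set.range x' := range_face_succ x y j
  have n0 : conormal b 0 = -(‖u‖⁻¹ • u) := by
    apply conormal_eq b (Fin.succ_ne_zero j) u hu0
    · rw [r0]; exact hu1
    · rw [r0, hb0, hbs]; exact hu2
  have nj : conormal b j.succ = -(‖u'‖⁻¹ • u') := by
    apply conormal_eq b (Fin.succ_ne_zero j).symm u' hu0'
    · rw [rj]; exact hu1'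
    · rw [rj, hb0, hbs]; exact hu2'
  have i1 : ⟪y - x j, conormal b 0⟫ = -‖u‖ := by
    have h := hu1 _ hu2
    rw [inner_sub_right, real_inner_self_eq_norm_sq, sub_eq_zero, real_inner_comm] at h
    rw [n0, inner_neg_right, inner_smul_right, h]
    field_simp
  have i2 : ⟪y - x j, conormal b j.succ⟫ = ‖u'‖ := by
    have h := hu1' _ hu2'
    rw [inner_sub_right, real_inner_self_eq_norm_sq, sub_eq_zero, real_inner_comm] at h
    rw [nj, inner_neg_right, inner_smul_right, ← neg_sub (x j) y, inner_neg_left, h]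
    field_simp
  have i3 : ∀ k, k ≠ j → ⟪y - x j, conormal b k.succ⟫ = 0 := by
    intro k hk
    apply conormal_inner_zero
    exact vsub_mem_vectorSpan ℝ ⟨⟨0, (Fin.succ_ne_zero k).symm⟩, rfl⟩
      ⟨⟨j.succ, fun h => hk (Fin.succ_injective _ h).symm⟩, by simp [face, hbs]⟩
  have hdim : (((d + 2 : ℕ) : ℝ) - 2) = d := by push_cast; ring
  unfold beam
  rw [hdim, Fin.sum_univ_succ, Finset.sum_eq_single j]
  · have s0 : simplexSet (face b 0) = simplexSet x := by unfold simplexSet; rw [r0]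
    have sj : simplexSet (face b j.succ) = simplexSet x' := by unfold simplexSet; rw [rj]
    rw [matVec_rankOne, matVec_rankOne, i1, i2, s0, sj, smul_smul, smul_smul, ← add_smul]
    congr 1
    rw [mul_sub, mul_div_assoc', mul_div_assoc', hmm]
    nth_rewrite 2 [← hmm]
    field_simp
    ring
  · intro k _ hk
    rw [matVec_rankOne, i3 k hk]; simp
  · simp

theorem beam_add_smul {K : ℕ} (r : ℝ) (A : Matrix (Fin n) (Fin n) ℝ) (b : Fin K → Euc n) :
    beam (r • A) b = r • beam A b := by
  funext S
  simp only [beam, Pi.smul_apply, Finset.smul_sum, matVec, map_smul, LinearMap.smul_apply]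
  apply Finset.sum_congr rfl
  intro i _
  rw [smul_comm]

/-- The subspace of beam sums. -/
def beamSub (n K : ℕ) : Submodule ℝ (Set (Euc n) → Euc n) where
  carrier := {G | IsBeamSum K G}
  zero_mem' := ⟨0, Fin.elim0, Fin.elim0, fun j => j.elim0, fun j => j.elim0, fun j => j.elim0, by
    funext S; simp⟩
  add_mem' := by
    rintro G G' ⟨m, τ, A, h1, h2, h3, rfl⟩ ⟨m', τ', A', h1', h2', h3', rfl⟩
    refine ⟨m + m', Fin.append τ τ', Fin.append A A', ?_, ?_, ?_, ?_⟩
    · intro j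
      refine Fin.addCases (fun i => ?_) (fun i => ?_) j
      · rw [Fin.append_left]; exact h1 i
      · rw [Fin.append_right]; exact h1' i
    · intro j
      refine Fin.addCases (fun i => ?_) (fun i => ?_) j
      · rw [Fin.append_left]; exact h2 i
      · rw [Fin.append_right]; exact h2' i
    · intro j
      refine Fin.addCases (fun i => ?_) (fun i => ?_) j
      · rw [Fin.append_left, Fin.append_left]; exact h3 i
      · rw [Fin.append_right, Fin.append_right]; exact h3' i
    · funext S
      rw [Fin.sum_univ_add]
      simp
  smul_mem' := by
    rintro r G ⟨m, τ, A, h1, h2, h3, rfl⟩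
    refine ⟨m, τ, fun j => r • A j, h1, fun j => ?_, fun j v => ?_, ?_⟩
    · have := h2 j
      unfold Matrix.IsSymm at *
      rw [Matrix.transpose_smul, this]
    · have := Submodule.smul_mem _ r (h3 j v)
      simpa [matVec] using this
    · funext S
      simp only [beam_add_smul, Pi.smul_apply, Finset.smul_sum]

/-- Normalised uniform load with resultant `g` on the simplex `x`. -/
def load {ι : Type*} (d : ℝ) (x : ι → Euc n) : Euc n →ₗ[ℝ] (Set (Euc n) → Euc n) where
  toFun g := fun S =>
    ((μH[d] (S ∩ simplexSet x)).toReal / (μH[d] (simplexSet x)).toReal) • g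
  map_add' g g' := by funext S; simp
  map_smul' r g := by funext S; simp [smul_comm r]

theorem load_slide {d : ℕ} (hdpos : 1 ≤ d) (x : Fin (d + 1) → Euc n) (j : Fin (d + 1)) (y : Euc n)
    (hx : AffineIndependent ℝ x) (hy : y ∉ affineSpan ℝ (Set.range x)) :
    load (d : ℝ) x (y - x j) - load (d : ℝ) (update x j y) (y - x j) ∈ beamSub n (d + 2) := by
  obtain ⟨κ, hκ, h⟩ := slide_beam hdpos x j y hx hy
  have hmem : beam (rankOne (y - x j)) (Fin.cons y x : Fin (d + 2) → Euc n) ∈ beamSub n (d + 2) := by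
    refine ⟨1, fun _ => Fin.cons y x, fun _ => rankOne (y - x j), fun _ => ?_, fun _ => ?_,
      fun _ v => ?_, ?_⟩
    · apply AffineIndependent.affineIndependent_of_notMem_span (i := 0)
      · have h1 := hx.comp_embedding
          (⟨fun k : {k : Fin (d + 2) // k ≠ 0} => k.1.pred k.2, fun a b h =>
            Subtype.ext (Fin.pred_inj.1 h)⟩ : {k : Fin (d + 2) // k ≠ 0} ↪ Fin (d + 1))
        have e : (fun k : {k : Fin (d + 2) // k ≠ 0} => (Fin.cons y x : Fin (d + 2) → Euc n) k) =
          fun k => x (k.1.pred k.2) := by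
          funext ⟨k, hk⟩
          obtain ⟨k, rfl⟩ := Fin.exists_succ_eq.2 hk
          simp
        rw [e]; exact h1
      · have e : (Fin.cons y x : Fin (d + 2) → Euc n) '' {k | k ≠ 0} = Set.range x := by
          rw [← range_face_zero x y]
          ext z; simp [face]
        rw [e]; simpa using hy
    · ext p q; simp [rankOne, mul_comm]
    · rw [matVec_rankOne]
      apply Submodule.smul_mem
      exact vsub_mem_vectorSpan ℝ ⟨0, rfl⟩ ⟨j.succ, by simp⟩
    · funext S; simp
  have e : load (d : ℝ) x (y - x j) - load (d : ℝ) (update x j y) (y - x j) =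
      (-κ⁻¹) • beam (rankOne (y - x j)) (Fin.cons y x : Fin (d + 2) → Euc n) := by
    funext S
    rw [Pi.smul_apply, h S, smul_smul, ← mul_assoc]
    simp only [load, LinearMap.coe_mk, AddHom.coe_mk, Pi.sub_apply]
    rw [← sub_smul]
    congr 1
    field_simp
    ring
  rw [e]
  exact Submodule.smul_mem _ _ hmem

theorem wedge_pairing {Q : Type*} [AddCommGroup Q] [Module ℝ Q] {l : ℕ} (X g : Fin l → Euc n)
    (h : ∑ i, wedge (X i) (g i) = 0) (D : Euc n →ₗ[ℝ] Euc n →ₗ[ℝ] Q)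
    (hD : ∀ v w, D v w = - D w v) : ∑ i, D (X i) (g i) = 0 := by
  let e : Fin n → Euc n := fun p => EuclideanSpace.single p 1
  have hexp : ∀ v : Euc n, v = ∑ p, v p • e p := by
    intro v
    have := (EuclideanSpace.basisFun (Fin n) ℝ).sum_repr v
    simpa [e] using this.symm
  have hDe : ∀ v w, D v w = ∑ p, ∑ q, (v p * w q) • D (e p) (e q) := by
    intro v w
    conv_lhs => rw [hexp v, hexp w]
    simp only [map_sum, LinearMap.sum_apply, map_smul, LinearMap.smul_apply, Finset.smul_sum,
      smul_smul]
    rw [Finset.sum_comm]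
    simp only [mul_comm]
  have h2 : (2:ℝ) • ∑ i, D (X i) (g i) = 0 := by
    have : ∀ i, (2:ℝ) • D (X i) (g i) = ∑ p, ∑ q, (wedge (X i) (g i) p q) • D (e p) (e q) := by
      intro i
      rw [two_smul]
      nth_rewrite 2 [hD]
      rw [hDe, hDe, ← sub_eq_add_neg, ← Finset.sum_sub_distrib]
      apply Finset.sum_congr rfl; intro p _
      rw [← Finset.sum_sub_distrib]
      apply Finset.sum_congr rfl; intro q _
      rw [← sub_smul]; simp [wedge]
    rw [Finset.smul_sum, Finset.sum_congr rfl fun i _ => this i, Finset.sum_comm]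
    apply Finset.sum_eq_zero; intro p _
    rw [Finset.sum_comm]
    apply Finset.sum_eq_zero; intro q _
    rw [← Finset.sum_smul]
    have := congrFun (congrFun h p) q
    rw [Matrix.sum_apply] at this
    rw [this]; simp
  simpa using h2

theorem wedge_smul (a r : ℝ) (v w : Euc n) : wedge (a • v) (r • w) = (a * r) • wedge v w := by
  ext p q; simp [wedge]; ring

theorem final_aux {d l : ℕ} (hdpos : 1 ≤ d) (hn : d + 1 ≤ n)
    (s : Fin l → Fin (d + 1) → Euc n) (hs : ∀ i, AffineIndependent ℝ (s i))
    (F : Fin l → Euc n) (hequil : equil (d : ℝ) s F) :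
    IsBeamSum (d + 2) (sys (d : ℝ) s F) := by
  change sys (d : ℝ) s F ∈ beamSub n (d + 2)
  let g : Fin l → Euc n := fun i => (μH[(d : ℝ)] (simplexSet (s i))).toReal • F i
  have hsys : sys (d : ℝ) s F = ∑ i, load (d : ℝ) (s i) (g i) := by
    funext S
    rw [Finset.sum_apply]
    unfold sys
    apply Finset.sum_congr rfl
    intro i _
    obtain ⟨hp, hf⟩ := simplex_pos_fin (s i) (hs i) d (Fintype.card_fin _)
    have hP := (ENNReal.toReal_pos hp.ne' hf.ne).ne'
    simp only [load, LinearMap.coe_mk, AddHom.coe_mk, g]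
    rw [smul_smul, div_mul_cancel₀ _ hP]
  let c : (Fin (d + 1) → Euc n) → Euc n →ₗ[ℝ] ((Set (Euc n) → Euc n) ⧸ beamSub n (d + 2)) :=
    fun x => (beamSub n (d + 2)).mkQ ∘ₗ load (d : ℝ) x
  have key := alg_main c ?_ ?_ ?_ s hs g hequil.1 ?_
  · rw [hsys, ← Submodule.Quotient.mk_eq_zero, ← Submodule.mkQ_apply, map_sum]
    exact key
  · intro x htop
    have h1 : vectorSpan ℝ (Set.range x) = ⊤ := by
      rw [← direction_affineSpan, htop, AffineSubspace.direction_top]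
    have h2 := finrank_vectorSpan_range_le ℝ x (Fintype.card_fin (d + 1))
    rw [h1, finrank_top, finrank_euclideanSpace_fin] at h2
    omega
  · intro x j y hx hy
    have := load_slide hdpos x j y hx hy
    simp only [c, LinearMap.comp_apply]
    exact (Submodule.Quotient.eq _).2 this
  · intro x i j
    have h1 : Set.range (x ∘ Equiv.swap i j) = Set.range x := (Equiv.swap i j).surjective.range_comp x
    have h2 : simplexSet (x ∘ Equiv.swap i j) = simplexSet x := by unfold simplexSet; rw [h1]
    have h3 : load (d : ℝ) (x ∘ Equiv.swap i j) = load (d : ℝ) x := by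
      apply LinearMap.ext; intro g; funext S
      simp only [load, LinearMap.coe_mk, AddHom.coe_mk, h2]
    simp only [c, h3]
  · intro D hD
    apply wedge_pairing _ _ _ D hD
    have h2 := hequil.2
    have : ∀ i, wedge (∑ k, s i k) (g i) = ((d : ℝ) + 1) •
        ((μH[(d : ℝ)] (simplexSet (s i))).toReal • wedge (bary (s i)) (F i)) := by
      intro i
      have e : ∑ k, s i k = ((d : ℝ) + 1) • bary (s i) := by
        unfold bary
        rw [Fintype.card_fin, smul_smul]
        push_cast
        rw [mul_inv_cancel₀ (by positivity), one_smul]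
      rw [e, wedge_smul, mul_smul]
    rw [Finset.sum_congr rfl fun i _ => this i, ← Finset.smul_sum, h2, smul_zero]

end Final

/-- The radial inductive step: with `k = k' + 3 ≥ 3` and `n ≥ k`,
assuming every equilibrium system on `(k−2)`-simplices (having `k − 1 = k' + 2`
vertices) decomposes into `(k−1)`-beams (over simplices with `k = k' + 3` vertices),
every equilibrium system on `(k−1)`-simplices having the origin as a vertex
decomposes into `k`-beams (over simplices with `k + 1 = k' + 4` vertices). -/
theorem statement4 {k' n l : ℕ} (hn : k' + 3 ≤ n)
    (IH : ∀ (l₂ : ℕ) (s₂ : Fin l₂ → Fin (k' + 2) → Euc n) (F₂ : Fin l₂ → Euc n),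
        (∀ i, AffineIndependent ℝ (s₂ i)) → equil ((k' : ℝ) + 1) s₂ F₂ →
        IsBeamSum (k' + 3) (sys ((k' : ℝ) + 1) s₂ F₂))
    (s : Fin l → Fin (k' + 3) → Euc n) (hs : ∀ i, AffineIndependent ℝ (s i))
    (h0 : ∀ i, s i 0 = 0)
    (F : Fin l → Euc n)
    (hequil : equil ((k' : ℝ) + 2) s F) :
    IsBeamSum (k' + 4) (sys ((k' : ℝ) + 2) s F) := by
  have e : ((k' : ℝ) + 2) = ((k' + 2 : ℕ) : ℝ) := by push_cast; ring
  rw [e] at hequil ⊢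
  exact final_aux (d := k' + 2) (by omega) hn s hs F hequil

end
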